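/- arXiv:2306.12553 — 2 statements merged into one kernel-verified Lean document; each statement's English description precedes it below -/
import Mathlib

section
/- Let f be a bounded measurable axisymmetric function on ℝ³, even in x₃, supported in the closed ball B̄₂. Then L⁻¹f ∈ C^{1,β}(B̄₂) for every 0 < β < 1, and there is a constant C > 0 independent of f such that |(L⁻¹f)(z)| + |∇(L⁻¹f)(z)| ≤ C ‖f‖_{L∞(B₂)} |z| for every z ∈ B₂. -/
noncomputable section

open MeasureTheory Metric Set Filter

/-- ℝ³ with the Euclidean norm. -/
abbrev E3 := EuclideanSpace ℝ (Fin 3)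
/-- ℝ⁵ with the Euclidean norm. -/
abbrev E5 := EuclideanSpace ℝ (Fin 5)

/-- Build a vector of ℝ³ from its coordinates. -/
def mk3 (a b c : ℝ) : E3 := (WithLp.equiv 2 (Fin 3 → ℝ)).symm ![a, b, c]
/-- Build a vector of ℝ⁵ from its coordinates. -/
def mk5 (a b c d e : ℝ) : E5 := (WithLp.equiv 2 (Fin 5 → ℝ)).symm ![a, b, c, d, e]

/-- The cylindrical radius r = √(x₁² + x₂²). -/
def cylRad (x : E3) : ℝ := Real.sqrt ((x 0)^2 + (x 1)^2)

/-- The reflection (x₁, x₂, x₃) ↦ (x₁, x₂, −x₃). -/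
def reflect3 (x : E3) : E3 := mk3 (x 0) (x 1) (-(x 2))

/-- Axisymmetric: a function of (r, x₃) only. -/
def Axisym (f : E3 → ℝ) : Prop := ∃ F : ℝ → ℝ → ℝ, ∀ x, f x = F (cylRad x) (x 2)

/-- Even in x₃. -/
def EvenZ (f : E3 → ℝ) : Prop := ∀ x, f (reflect3 x) = f x

/-- Five-dimensional extension of an axisymmetric function on ℝ³. -/
def tilde (f : E3 → ℝ) (y : E5) : ℝ :=
  f (mk3 (Real.sqrt ((y 0)^2 + (y 1)^2 + (y 2)^2 + (y 3)^2)) 0 (y 4))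

/-- The embedding (x₁,x₂,x₃) ↦ (x₁,x₂,0,0,x₃) of ℝ³ into ℝ⁵. -/
def emb (x : E3) : E5 := mk5 (x 0) (x 1) 0 0 (x 2)

/-- The operator L⁻¹, given by
(L⁻¹f)(x) = C₅ (x₁²+x₂²) ∫_{ℝ⁵} |(x₁,x₂,0,0,x₃) − y|⁻³ f̃(y) dy. -/
def Linv (C₅ : ℝ) (f : E3 → ℝ) (x : E3) : ℝ :=
  C₅ * ((x 0)^2 + (x 1)^2) * ∫ y : E5, (‖emb x - y‖ ^ 3)⁻¹ * tilde f y

set_option linter.unusedVariables false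

lemma sc1 {h t β : ℝ} (hh : 0 ≤ h) (ht : 0 < t) (hle : h ≤ t) (h0 : 0 < β) (h1 : β < 1) :
    h ^ 2 * (t ^ 5)⁻¹ ≤ h ^ (1+β) * t ^ (-4-β) := by
  have e1 : h ^ 2 = h ^ (1+β) * h ^ (1-β) := by
    rw [← Real.rpow_add_of_nonneg hh (by linarith) (by linarith), ← Real.rpow_natCast]
    congr 1; push_cast; ring
  have e2 : (t ^ 5)⁻¹ * t ^ (1-β) = t ^ (-4-β) := by
    rw [← Real.rpow_natCast, ← Real.rpow_neg ht.le, ← Real.rpow_add ht]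
    congr 1; push_cast; ring
  have e3 : h ^ (1-β) ≤ t ^ (1-β) := Real.rpow_le_rpow hh hle (by linarith)
  rw [e1, ← e2, mul_assoc]
  have : 0 ≤ h ^ (1+β) := Real.rpow_nonneg hh _
  have : 0 ≤ (t^5)⁻¹ := by positivity
  rw [mul_comm (h ^ (1-β))]
  gcongr

lemma sc2 {h t β : ℝ} (hh : 0 ≤ h) (ht : 0 < t) (hle : t ≤ 3 * h) (h0 : 0 < β) (h1 : β < 1) :
    (t ^ 3)⁻¹ ≤ 9 * (h ^ (1+β) * t ^ (-4-β)) := by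
  have e2 : (t ^ 3)⁻¹ = t ^ (1+β) * t ^ (-4-β) := by
    rw [← Real.rpow_natCast, ← Real.rpow_neg ht.le, ← Real.rpow_add ht]
    congr 1; push_cast; ring
  have e3 : t ^ (1+β) ≤ (3*h) ^ (1+β) := Real.rpow_le_rpow ht.le hle (by linarith)
  have e4 : (3*h) ^ (1+β) ≤ 9 * h ^ (1+β) := by
    rw [Real.mul_rpow (by norm_num) hh]
    have h3 : (3:ℝ) ^ (1+β) ≤ 3 ^ (2:ℝ) :=
      Real.rpow_le_rpow_of_exponent_le (by norm_num) (by linarith)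
    have h9 : (3:ℝ) ^ (2:ℝ) = 9 := by norm_num
    have := Real.rpow_nonneg hh (1+β)
    rw [h9] at h3
    gcongr
  have : 0 ≤ t ^ (-4-β) := Real.rpow_nonneg ht.le _
  rw [e2, ← mul_assoc]
  gcongr
  linarith

lemma pw1 {s t h β : ℝ} (hs : 0 < s) (ht : 0 < t) (hh : 0 ≤ h) (h0 : 0 < β) (h1 : β < 1)
    (hst : |s - t| ≤ h) (hin : |s^2 - t^2 - h^2| ≤ 2 * t * h) :
    |(s^3)⁻¹ - (t^3)⁻¹ + 3/2 * (t^5)⁻¹ * (s^2 - t^2 - h^2)|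
      ≤ 100 * (h ^ (1+β) * (s ^ (-4-β) + t ^ (-4-β))) := by
  have ps : 0 ≤ h ^ (1+β) * s ^ (-4-β) := by positivity
  have pt : 0 ≤ h ^ (1+β) * t ^ (-4-β) := by positivity
  rw [abs_le] at hst
  rcases le_total (2*h) t with hc | hc
  · have k := sc1 hh ht (by linarith) h0 h1
    have e : (s^3)⁻¹ - (t^3)⁻¹ + 3/2 * (t^5)⁻¹ * (s^2 - t^2 - h^2)
      = (s-t)^2 * ((3/2+3*(t/s)+2*(t/s)^2+(t/s)^3) * (t^5)⁻¹) - 3/2 * (h^2 * (t^5)⁻¹) := by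
      field_simp; ring
    have r0 : 0 ≤ t / s := by positivity
    have r1 : t / s ≤ 2 := by rw [div_le_iff₀ hs]; linarith
    have r2 : (t/s)^2 ≤ 4 := by nlinarith
    have r3 : (t/s)^3 ≤ 8 := by nlinarith [pow_nonneg r0 2]
    have sq : (s-t)^2 ≤ h^2 := by nlinarith
    have i5 : 0 ≤ (t^5)⁻¹ := by positivity
    have A : (s-t)^2 * ((3/2+3*(t/s)+2*(t/s)^2+(t/s)^3) * (t^5)⁻¹) ≤ h^2 * (24 * (t^5)⁻¹) := by
      gcongr; linarith
    have B : 0 ≤ (s-t)^2 * ((3/2+3*(t/s)+2*(t/s)^2+(t/s)^3) * (t^5)⁻¹) := by positivity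
    have D : 0 ≤ h^2 * (t^5)⁻¹ := by positivity
    rw [e, abs_le]; constructor <;> nlinarith
  · have k1 := sc2 hh hs (by linarith) h0 h1
    have k2 := sc2 hh ht (by linarith) h0 h1
    have i5 : 0 ≤ (t^5)⁻¹ := by positivity
    have A : |3/2 * (t^5)⁻¹ * (s^2 - t^2 - h^2)| ≤ 3 * h * (t * (t^5)⁻¹) := by
      rw [abs_mul, abs_of_nonneg (by positivity)]
      nlinarith
    have B : h * (t * (t^5)⁻¹) ≤ 2 * (h ^ (1+β) * t ^ (-4-β)) := by
      have e1 : t * (t ^ 5)⁻¹ = t ^ β * t ^ (-4-β) := by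
        rw [← Real.rpow_add ht]
        have : t * (t^5)⁻¹ = (t^4)⁻¹ := by field_simp
        rw [this, ← Real.rpow_natCast, ← Real.rpow_neg ht.le]
        congr 1; push_cast; ring
      have hp : 0 < h := by linarith
      have e2 : h ^ (1+β) = h * h^β := by rw [Real.rpow_add hp, Real.rpow_one]
      have e3 : t ^ β ≤ (2*h)^β := Real.rpow_le_rpow ht.le hc h0.le
      have e4 : (2*h)^β ≤ 2 * h^β := by
        rw [Real.mul_rpow (by norm_num) hh]
        have : (2:ℝ)^β ≤ 2^(1:ℝ) := Real.rpow_le_rpow_of_exponent_le (by norm_num) h1.le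
        rw [Real.rpow_one] at this
        gcongr
      rw [e1, e2]
      have : 0 ≤ t ^ (-4-β) := by positivity
      calc _ ≤ h * ((2*h^β) * t ^ (-4-β)) := by gcongr; linarith
        _ = _ := by ring
    have i1 : 0 ≤ (s^3)⁻¹ := by positivity
    have i2 : 0 ≤ (t^3)⁻¹ := by positivity
    rw [abs_le] at A ⊢
    constructor <;> nlinarith

variable {E : Type*} [NormedAddCommGroup E] [InnerProductSpace ℝ E]

lemma pwK {a b : E} (ha : a ≠ 0) (hb : b ≠ 0) {β : ℝ} (h0 : 0 < β) (h1 : β < 1) :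
    |(‖a‖^3)⁻¹ - (‖b‖^3)⁻¹ - inner ℝ ((-3 * (‖b‖^5)⁻¹) • b) (a - b)|
      ≤ 100 * (‖a-b‖ ^ (1+β) * (‖a‖ ^ (-4-β) + ‖b‖ ^ (-4-β))) := by
  have e : ‖a‖^2 - ‖b‖^2 - ‖a-b‖^2 = 2 * inner ℝ b (a-b) := by
    have := norm_add_sq_real b (a-b)
    rw [add_sub_cancel] at this
    linarith
  have := pw1 (norm_pos_iff.2 ha) (norm_pos_iff.2 hb) (norm_nonneg (a-b)) h0 h1
    (abs_norm_sub_norm_le a b) (by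
      rw [e, abs_mul, abs_two]; have := abs_real_inner_le_norm b (a-b); linarith)
  rw [e] at this
  convert this using 2
  rw [real_inner_smul_left]; ring

lemma sc3 {h t β : ℝ} (hh : 0 ≤ h) (ht : 0 < t) (hle : h ≤ t) (h0 : 0 < β) (h1 : β < 1) :
    h * (t ^ 5)⁻¹ ≤ h ^ β * t ^ (-4-β) := by
  rcases hh.eq_or_lt with rfl | hp
  · rw [Real.zero_rpow h0.ne']; simp
  have k := sc1 hh ht hle h0 h1
  rw [Real.rpow_add hp, Real.rpow_one, sq, mul_assoc, mul_assoc] at k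
  exact le_of_mul_le_mul_left k hp

lemma sc4 {h t β : ℝ} (hh : 0 ≤ h) (ht : 0 < t) (hle : t ≤ h) (h0 : 0 < β) (h1 : β < 1) :
    (t ^ 4)⁻¹ ≤ h ^ β * t ^ (-4-β) := by
  have e2 : (t ^ 4)⁻¹ = t ^ β * t ^ (-4-β) := by
    rw [← Real.rpow_natCast, ← Real.rpow_neg ht.le, ← Real.rpow_add ht]
    congr 1; push_cast; ring
  rw [e2]
  have : 0 ≤ t ^ (-4-β) := Real.rpow_nonneg ht.le _
  gcongr

lemma pwV0 {a b : E} (ha : a ≠ 0) (hab : ‖a‖ ≤ ‖b‖) {β : ℝ} (h0 : 0 < β) (h1 : β < 1) :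
    ‖(‖a‖^5)⁻¹ • a - (‖b‖^5)⁻¹ • b‖ ≤ 6 * (‖a-b‖ ^ β * ‖a‖ ^ (-4-β)) := by
  have pa := norm_pos_iff.2 ha
  have pb := pa.trans_le hab
  have pos : 0 ≤ ‖a-b‖ ^ β * ‖a‖ ^ (-4-β) := by positivity
  rcases le_total ‖a-b‖ ‖a‖ with hc | hc
  · have k := sc3 (norm_nonneg (a-b)) pa hc h0 h1
    have e : (‖a‖^5)⁻¹ • a - (‖b‖^5)⁻¹ • b = (‖a‖^5)⁻¹ • (a-b) + ((‖a‖^5)⁻¹ - (‖b‖^5)⁻¹) • b := by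
      module
    have tri : ‖b‖ - ‖a‖ ≤ ‖a-b‖ := by rw [norm_sub_rev]; exact norm_sub_norm_le b a
    have hi : (‖b‖^5)⁻¹ ≤ (‖a‖^5)⁻¹ := by gcongr
    have : ((‖a‖^5)⁻¹ - (‖b‖^5)⁻¹) * ‖b‖ ≤ 5 * (‖a-b‖ * (‖a‖^5)⁻¹) := by
      generalize ‖a‖ = s at *
      generalize ‖b‖ = t at *
      generalize ‖a-b‖ = h at *
      have e : ((s^5)⁻¹ - (t^5)⁻¹) * t = (t-s) * (1 + s/t+(s/t)^2+(s/t)^3+(s/t)^4) * (s^5)⁻¹ := by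
        field_simp; ring
      have r0 : 0 ≤ s/t := by positivity
      have r1 : s/t ≤ 1 := by rw [div_le_one pb]; exact hab
      have := pow_le_one₀ (n:=2) r0 r1
      have := pow_le_one₀ (n:=3) r0 r1
      have := pow_le_one₀ (n:=4) r0 r1
      rw [e]
      have hh : 0 ≤ h := by linarith
      calc _ ≤ h * 5 * (s^5)⁻¹ := by gcongr; linarith
        _ = _ := by ring
    rw [e]
    refine (norm_add_le _ _).trans ?_
    rw [norm_smul, norm_smul, Real.norm_of_nonneg (by positivity), Real.norm_of_nonneg (by linarith)]
    linarith
  · have k := sc4 (norm_nonneg (a-b)) pa hc h0 h1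
    refine (norm_sub_le _ _).trans ?_
    rw [norm_smul, norm_smul, Real.norm_of_nonneg (by positivity), Real.norm_of_nonneg (by positivity)]
    have e1 : (‖a‖^5)⁻¹ * ‖a‖ = (‖a‖^4)⁻¹ := by field_simp
    have e2 : (‖b‖^5)⁻¹ * ‖b‖ = (‖b‖^4)⁻¹ := by field_simp
    have hi : (‖b‖^4)⁻¹ ≤ (‖a‖^4)⁻¹ := by gcongr
    rw [e1, e2]; linarith

lemma pwV {a b : E} (ha : a ≠ 0) (hb : b ≠ 0) {β : ℝ} (h0 : 0 < β) (h1 : β < 1) :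
    ‖(-3 * (‖a‖^5)⁻¹) • a - (-3 * (‖b‖^5)⁻¹) • b‖
      ≤ 18 * (‖a-b‖ ^ β * (‖a‖ ^ (-4-β) + ‖b‖ ^ (-4-β))) := by
  have e : (-3 * (‖a‖^5)⁻¹) • a - (-3 * (‖b‖^5)⁻¹) • b
     = (-3:ℝ) • ((‖a‖^5)⁻¹ • a - (‖b‖^5)⁻¹ • b) := by module
  have p1 : 0 ≤ ‖a-b‖ ^ β * ‖a‖ ^ (-4-β) := by positivity
  have p2 : 0 ≤ ‖a-b‖ ^ β * ‖b‖ ^ (-4-β) := by positivity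
  rw [e, norm_smul]
  norm_num
  rcases le_total ‖a‖ ‖b‖ with h | h
  · have := pwV0 ha h h0 h1
    linarith
  · have := pwV0 hb h h0 h1
    rw [norm_sub_rev, norm_sub_rev b a] at this
    linarith

/-- local integrability with uniform bound -/
lemma kbound {p : ℝ} (hp : p < 5) (hp0 : 0 ≤ p) : ∃ A : ℝ, 0 ≤ A ∧ ∀ (g : E5 → ℝ) (M : ℝ), Measurable g →
    (∀ y, |g y| ≤ M) → Function.support g ⊆ closedBall (0:E5) 2 → ∀ w : E5,
    Integrable (fun y => ‖w - y‖ ^ (-p) * |g y|) ∧ ∫ y, ‖w - y‖ ^ (-p) * |g y| ≤ A * M := by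
  have hk : Integrable ((ball (0:E5) 1).indicator (fun v => ‖v‖ ^ (-p))) := by
    rw [integrable_indicator_iff measurableSet_ball]
    rw [integrableOn_fun_norm_addHaar volume (f := fun x : ℝ => x ^ (-p))]
    have h1 : IntegrableOn (fun x : ℝ => x ^ (4 - p)) (Ioo 0 1) := by
      rw [intervalIntegral.integrableOn_Ioo_rpow_iff (by norm_num)]; linarith
    refine h1.congr_fun ?_ measurableSet_Ioo
    intro x hx
    simp only [finrank_euclideanSpace, Fintype.card_fin, smul_eq_mul]
    rw [← Real.rpow_natCast, ← Real.rpow_add hx.1]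
    norm_num [sub_eq_add_neg]
  set k : E5 → ℝ := (ball (0:E5) 1).indicator (fun v => ‖v‖ ^ (-p)) with hkd
  set B : E5 → ℝ := (closedBall (0:E5) 2).indicator (fun _ => (1:ℝ)) with hBd
  have hB : Integrable B := by
    rw [hBd, integrable_indicator_iff measurableSet_closedBall]
    exact integrableOn_const measure_closedBall_lt_top.ne
  have k0 : ∀ v, 0 ≤ k v := fun v => indicator_nonneg (fun v _ => by positivity) v
  have B0 : ∀ v, 0 ≤ B v := fun v => indicator_nonneg (fun v _ => by positivity) v
  refine ⟨(∫ v, k v) + ∫ v, B v, add_nonneg (integral_nonneg k0) (integral_nonneg B0), ?_⟩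
  intro g M gm gM gs w
  have M0 : 0 ≤ M := (abs_nonneg _).trans (gM 0)
  have hkw : Integrable (fun y => k (w - y)) := hk.comp_sub_left w
  have dom : ∀ y, ‖w - y‖ ^ (-p) * |g y| ≤ (k (w-y) + B y) * M := by
    intro y
    by_cases hg : g y = 0
    · rw [hg]; simp only [abs_zero, mul_zero]
      exact mul_nonneg (add_nonneg (k0 _) (B0 _)) M0
    · have hy : B y = 1 := indicator_of_mem (gs hg) _
      have : ‖w-y‖^(-p) ≤ k (w-y) + B y := by
        rw [hy]
        by_cases hw : w - y ∈ ball (0:E5) 1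
        · rw [hkd, indicator_of_mem hw]; linarith
        · rw [hkd, indicator_of_notMem hw]
          rw [mem_ball_zero_iff, not_lt] at hw
          rw [zero_add]
          exact Real.rpow_le_one_of_one_le_of_nonpos hw (by linarith)
      have := gM y
      have := k0 (w-y)
      have := B0 y
      gcongr
  have I2 : Integrable (fun y => (k (w-y) + B y) * M) := (hkw.add hB).mul_const M
  have I1 : Integrable (fun y => ‖w - y‖ ^ (-p) * |g y|) := by
    refine I2.mono' ?_ (Eventually.of_forall fun y => ?_)
    · apply Measurable.aestronglyMeasurable; fun_prop
    · rw [Real.norm_of_nonneg (by positivity)]; exact dom y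
  refine ⟨I1, (integral_mono I1 I2 dom).trans_eq ?_⟩
  rw [integral_mul_const, integral_add hkw hB, integral_sub_left_eq_self k]

noncomputable def Gp (g : E5 → ℝ) (w : E5) : ℝ := ∫ y, (‖w - y‖ ^ 3)⁻¹ * g y
noncomputable def Vp (g : E5 → ℝ) (w : E5) : E5 := ∫ y, g y • ((-3 * (‖w - y‖ ^ 5)⁻¹) • (w - y))

lemma rp3 (t : ℝ) (ht : 0 ≤ t) : t ^ (-(3:ℝ)) = (t^3)⁻¹ := by
  rw [Real.rpow_neg ht]; norm_cast
lemma rp4 (t : ℝ) (ht : 0 ≤ t) : t ^ (-(4:ℝ)) = (t^4)⁻¹ := by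
  rw [Real.rpow_neg ht]; norm_cast
lemma nV (v : E5) (c : ℝ) : ‖c • ((-3 * (‖v‖ ^ 5)⁻¹) • v)‖ = 3 * (‖v‖ ^ (-(4:ℝ)) * |c|) := by
  rw [rp4 _ (norm_nonneg _), norm_smul, norm_smul, norm_mul, Real.norm_of_nonneg (r := (‖v‖^5)⁻¹) (by positivity)]
  rcases eq_or_ne v 0 with rfl | h
  · simp
  · have := norm_pos_iff.2 h
    simp only [Real.norm_eq_abs]
    norm_num
    field_simp

lemma Gint {g : E5 → ℝ} {M : ℝ} (gm : Measurable g)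
    (gM : ∀ y, |g y| ≤ M) (gs : Function.support g ⊆ closedBall (0:E5) 2) (w : E5) :
    Integrable (fun y => (‖w - y‖ ^ 3)⁻¹ * g y) := by
  obtain ⟨A, hA, h⟩ := kbound (p := 3) (by norm_num) (by norm_num)
  refine (h g M gm gM gs w).1.mono' (Measurable.aestronglyMeasurable (by fun_prop))
    (Eventually.of_forall fun y => le_of_eq ?_)
  rw [rp3 _ (norm_nonneg _), norm_mul, Real.norm_of_nonneg (by positivity), Real.norm_eq_abs]

lemma Vint {g : E5 → ℝ} {M : ℝ} (gm : Measurable g)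
    (gM : ∀ y, |g y| ≤ M) (gs : Function.support g ⊆ closedBall (0:E5) 2) (w : E5) :
    Integrable (fun y => g y • ((-3 * (‖w - y‖ ^ 5)⁻¹) • (w - y))) := by
  obtain ⟨A, hA, h⟩ := kbound (p := 4) (by norm_num) (by norm_num)
  refine ((h g M gm gM gs w).1.const_mul 3).mono' (Measurable.aestronglyMeasurable (by fun_prop))
    (Eventually.of_forall fun y => le_of_eq (nV _ _))

lemma Gbd : ∃ A : ℝ, 0 ≤ A ∧ ∀ (g : E5 → ℝ) (M : ℝ), Measurable g →
    (∀ y, |g y| ≤ M) → Function.support g ⊆ closedBall (0:E5) 2 → ∀ w : E5,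
    |Gp g w| ≤ A * M := by
  obtain ⟨A, hA, h⟩ := kbound (p := 3) (by norm_num) (by norm_num)
  refine ⟨A, hA, fun g M gm gM gs w => ?_⟩
  refine (norm_integral_le_integral_norm (μ := (volume : Measure E5)) (fun y => (‖w - y‖ ^ 3)⁻¹ * g y)).trans (Eq.trans_le ?_ (h g M gm gM gs w).2)
  refine integral_congr_ae (μ := volume) (Eventually.of_forall fun y => ?_)
  simp only
  rw [rp3 _ (norm_nonneg _), norm_mul, Real.norm_of_nonneg (by positivity), Real.norm_eq_abs]

lemma Vbd : ∃ A : ℝ, 0 ≤ A ∧ ∀ (g : E5 → ℝ) (M : ℝ), Measurable g →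
    (∀ y, |g y| ≤ M) → Function.support g ⊆ closedBall (0:E5) 2 → ∀ w : E5,
    ‖Vp g w‖ ≤ A * M := by
  obtain ⟨A, hA, h⟩ := kbound (p := 4) (by norm_num) (by norm_num)
  refine ⟨3*A, by positivity, fun g M gm gM gs w => ?_⟩
  refine (norm_integral_le_integral_norm (μ := (volume : Measure E5)) _).trans ?_
  simp_rw [nV]
  rw [integral_const_mul, mul_assoc]
  gcongr
  exact (h g M gm gM gs w).2

lemma ae_ne (w : E5) : ∀ᵐ y : E5, w - y ≠ 0 := by
  have := (Measure.ae_ne (μ := (volume : Measure E5)) w)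
  filter_upwards [this] with y hy h
  exact hy (sub_eq_zero.1 h).symm

lemma Vholder {β : ℝ} (h0 : 0 < β) (h1 : β < 1) {g : E5 → ℝ} {M : ℝ} (gm : Measurable g)
    (gM : ∀ y, |g y| ≤ M) (gs : Function.support g ⊆ closedBall (0:E5) 2) :
    ∃ C : ℝ, 0 ≤ C ∧ ∀ w z, ‖Vp g w - Vp g z‖ ≤ C * ‖w - z‖ ^ β := by
  obtain ⟨A, hA, h⟩ := kbound (p := 4+β) (by linarith) (by linarith)
  have M0 : 0 ≤ M := (abs_nonneg _).trans (gM 0)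
  refine ⟨36 * (A * M), by positivity, fun w z => ?_⟩
  obtain ⟨iw, bw⟩ := h g M gm gM gs w
  obtain ⟨iz, bz⟩ := h g M gm gM gs z
  rw [Vp, Vp, ← integral_sub (Vint gm gM gs w) (Vint gm gM gs z)]
  have key : ‖∫ y, g y • ((-3 * (‖w - y‖ ^ 5)⁻¹) • (w - y)) - g y • ((-3 * (‖z - y‖ ^ 5)⁻¹) • (z - y))‖
     ≤ ∫ y, 18 * ‖w-z‖^β * (‖w - y‖ ^ (-(4+β)) * |g y| + ‖z - y‖ ^ (-(4+β)) * |g y|) := by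
    refine norm_integral_le_of_norm_le ((iw.add iz).const_mul _) ?_
    filter_upwards [ae_ne w, ae_ne z] with y hw hz
    have := pwV hw hz h0 h1
    rw [sub_sub_sub_cancel_right] at this
    rw [← smul_sub, norm_smul, Real.norm_eq_abs, neg_add']
    calc _ ≤ _ := mul_le_mul_of_nonneg_left this (abs_nonneg _)
      _ = _ := by ring
  refine key.trans ?_
  rw [integral_const_mul, integral_add iw iz]
  have : 0 ≤ ‖w-z‖^β := by positivity
  nlinarith

lemma Gderiv {g : E5 → ℝ} {M : ℝ} (gm : Measurable g)
    (gM : ∀ y, |g y| ≤ M) (gs : Function.support g ⊆ closedBall (0:E5) 2) (w : E5) :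
    HasFDerivAt (Gp g) (innerSL ℝ (Vp g w)) w := by
  obtain ⟨A, hA, h⟩ := kbound (p := 4+1/2) (by norm_num) (by norm_num)
  have key : ∀ z, ‖Gp g z - Gp g w - inner ℝ (Vp g w) (z - w)‖ ≤ 200 * (A * M) * ‖z - w‖ ^ (1 + 1/2 : ℝ) := by
    intro z
    obtain ⟨iw, bw⟩ := h g M gm gM gs w
    obtain ⟨iz, bz⟩ := h g M gm gM gs z
    have e : inner ℝ (Vp g w) (z - w) = ∫ y, inner ℝ (z - w) (g y • ((-3 * (‖w - y‖ ^ 5)⁻¹) • (w - y))) := by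
      rw [real_inner_comm, Vp, integral_inner (Vint gm gM gs w)]
    have iI : Integrable (fun y => inner ℝ (z - w) (g y • ((-3 * (‖w - y‖ ^ 5)⁻¹) • (w - y)))) :=
      (Vint gm gM gs w).const_inner _
    rw [e, Gp, Gp, ← integral_sub (Gint gm gM gs z) (Gint gm gM gs w), ← integral_sub (f := fun y => (‖z - y‖ ^ 3)⁻¹ * g y - (‖w - y‖ ^ 3)⁻¹ * g y) ((Gint gm gM gs z).sub (Gint gm gM gs w)) iI]
    have key : ‖∫ y, ((‖z - y‖ ^ 3)⁻¹ * g y - (‖w - y‖ ^ 3)⁻¹ * g y - inner ℝ (z - w) (g y • ((-3 * (‖w - y‖ ^ 5)⁻¹) • (w - y))))‖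
     ≤ ∫ y, 100 * ‖z-w‖^(1+1/2:ℝ) * (‖z - y‖ ^ (-(4+1/2:ℝ)) * |g y| + ‖w - y‖ ^ (-(4+1/2:ℝ)) * |g y|) := by
      refine norm_integral_le_of_norm_le ((iz.add iw).const_mul _) ?_
      filter_upwards [ae_ne w, ae_ne z] with y hw hz
      have := pwK hz hw (β := 1/2) (by norm_num) (by norm_num)
      rw [sub_sub_sub_cancel_right] at this
      rw [inner_smul_right, real_inner_comm, neg_add']
      have e : (‖z - y‖ ^ 3)⁻¹ * g y - (‖w - y‖ ^ 3)⁻¹ * g y - g y * inner ℝ ((-3 * (‖w - y‖ ^ 5)⁻¹) • (w - y)) (z - w) = g y * ((‖z - y‖ ^ 3)⁻¹ - (‖w - y‖ ^ 3)⁻¹ - inner ℝ ((-3 * (‖w - y‖ ^ 5)⁻¹) • (w - y)) (z - w)) := by ring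
      rw [e, norm_mul, Real.norm_eq_abs, Real.norm_eq_abs]
      calc _ ≤ _ := mul_le_mul_of_nonneg_left this (abs_nonneg _)
        _ = _ := by ring
    refine key.trans ?_
    rw [integral_const_mul, integral_add iz iw]
    have : 0 ≤ ‖z-w‖^(1+1/2:ℝ) := by positivity
    nlinarith
  rw [hasFDerivAt_iff_isLittleO]
  have hO : (fun z => Gp g z - Gp g w - (innerSL ℝ (Vp g w)) (z - w)) =O[nhds w]
      (fun z => ‖z - w‖ ^ (1 + 1/2 : ℝ)) := by
    refine Asymptotics.IsBigO.of_bound (200 * (A*M)) (Eventually.of_forall fun z => ?_)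
    rw [Real.norm_of_nonneg (r := ‖z-w‖ ^ _) (by positivity)]
    exact key z
  refine hO.trans_isLittleO ?_
  have ho : (fun z : E5 => ‖z - w‖ ^ (1 + 1/2 : ℝ)) = fun z => ‖z - w‖ * ‖z-w‖ ^ (1/2:ℝ) := by
    ext z
    rw [Real.rpow_add_of_nonneg (norm_nonneg _) (by norm_num) (by norm_num), Real.rpow_one]
  rw [ho]
  have t : Tendsto (fun z : E5 => ‖z-w‖ ^ (1/2:ℝ)) (nhds w) (nhds 0) := by
    have c : Continuous (fun z : E5 => ‖z-w‖ ^ (1/2:ℝ)) :=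
      (by fun_prop : Continuous fun z : E5 => ‖z-w‖).rpow_const (fun _ => Or.inr (by norm_num))
    have := c.tendsto w
    simpa using this
  have l := (Asymptotics.isBigO_refl (fun z : E5 => ‖z - w‖) (nhds w)).mul_isLittleO
    ((Asymptotics.isLittleO_one_iff ℝ).2 t)
  simpa using l

lemma mk3_apply (a b c : ℝ) : (mk3 a b c) 0 = a ∧ (mk3 a b c) 1 = b ∧ (mk3 a b c) 2 = c := by
  simp [mk3]

lemma norm_emb (x : E3) : ‖emb x‖ = ‖x‖ := by
  rw [EuclideanSpace.norm_eq, EuclideanSpace.norm_eq]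
  simp [emb, mk5, Fin.sum_univ_succ]

def embL : E3 →L[ℝ] E5 := LinearMap.toContinuousLinearMap
  { toFun := emb
    map_add' := by
      intro x y; ext i; fin_cases i <;> simp [emb, mk5]
    map_smul' := by
      intro c x; ext i; fin_cases i <;> simp [emb, mk5] }

lemma embL_apply (x : E3) : embL x = emb x := rfl

lemma embL_norm : ‖embL‖ ≤ 1 :=
  ContinuousLinearMap.opNorm_le_bound _ zero_le_one fun x => by
    rw [embL_apply, norm_emb, one_mul]

lemma tilde_meas {f : E3 → ℝ} (hf : Measurable f) : Measurable (tilde f) := by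
  unfold tilde mk3
  refine hf.comp ?_
  refine (WithLp.measurable_toLp 2 (Fin 3 → ℝ)).comp ?_
  refine measurable_pi_iff.2 fun i => ?_
  fin_cases i <;> simp <;> fun_prop

lemma tilde_supp {f : E3 → ℝ} (hf : Function.support f ⊆ closedBall (0:E3) 2) :
    Function.support (tilde f) ⊆ closedBall (0:E5) 2 := by
  intro y hy
  have h : mk3 (Real.sqrt ((y 0)^2 + (y 1)^2 + (y 2)^2 + (y 3)^2)) 0 (y 4) ∈ closedBall (0:E3) 2 := hf hy
  rw [mem_closedBall_zero_iff] at h ⊢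
  convert h using 1
  rw [EuclideanSpace.norm_eq, EuclideanSpace.norm_eq]
  have : 0 ≤ (y 0)^2 + (y 1)^2 + (y 2)^2 + (y 3)^2 := by positivity
  simp [mk3, Fin.sum_univ_succ, Real.sq_sqrt this]
  ring_nf

def rho (x : E3) : ℝ := (x 0)^2 + (x 1)^2

def Pr (i : Fin 3) : E3 →L[ℝ] ℝ := EuclideanSpace.proj i

def Rr (x : E3) : E3 →L[ℝ] ℝ := (2 * x 0) • Pr 0 + (2 * x 1) • Pr 1

lemma coord_le (x : E3) (i : Fin 3) : |x i| ≤ ‖x‖ := PiLp.norm_apply_le x i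

lemma Pr_norm (i : Fin 3) : ‖Pr i‖ ≤ 1 :=
  ContinuousLinearMap.opNorm_le_bound _ zero_le_one fun x => by
    rw [one_mul]; exact coord_le x i

lemma Rr_norm (x : E3) : ‖Rr x‖ ≤ 4 * ‖x‖ := by
  unfold Rr
  refine (norm_add_le _ _).trans ?_
  rw [norm_smul, norm_smul, norm_mul, norm_mul]
  have := coord_le x 0
  have := coord_le x 1
  have := Pr_norm 0
  have := Pr_norm 1
  simp only [Real.norm_eq_abs, abs_two]
  have a0 : 2 * |x 0| * ‖Pr 0‖ ≤ 2 * ‖x‖ * 1 := by gcongr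
  have a1 : 2 * |x 1| * ‖Pr 1‖ ≤ 2 * ‖x‖ * 1 := by gcongr
  linarith

lemma Rr_sub (x y : E3) : Rr x - Rr y = Rr (x - y) := by
  unfold Rr
  simp only [PiLp.sub_apply]
  module

lemma rho_nonneg (x : E3) : 0 ≤ rho x := by unfold rho; positivity

lemma rho_le (x : E3) : rho x ≤ ‖x‖^2 := by
  rw [EuclideanSpace.norm_sq_eq, Fin.sum_univ_three]
  simp only [Real.norm_eq_abs, sq_abs, rho]
  nlinarith [sq_nonneg (x 2)]

lemma rho_sub {x y : E3} (hx : ‖x‖ ≤ 2) (hy : ‖y‖ ≤ 2) : |rho x - rho y| ≤ 8 * ‖x - y‖ := by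
  have e : rho x - rho y = (x - y) 0 * (x 0 + y 0) + (x - y) 1 * (x 1 + y 1) := by
    simp only [rho, PiLp.sub_apply]; ring
  have k : ∀ i, |(x - y) i * (x i + y i)| ≤ ‖x-y‖ * 4 := by
    intro i
    rw [abs_mul]
    have h1 := coord_le (x-y) i
    have h2 := coord_le x i
    have h3 := coord_le y i
    have h4 := abs_add_le (x i) (y i)
    exact mul_le_mul h1 (by linarith) (abs_nonneg _) (norm_nonneg _)
  rw [e]
  refine (abs_add_le _ _).trans ?_
  linarith [k 0, k 1]

lemma rho_deriv (x : E3) : HasFDerivAt rho (Rr x) x := by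
  have h : ∀ i, HasFDerivAt (fun x : E3 => x i) (Pr i) x := fun i => (Pr i).hasFDerivAt
  have := ((h 0).pow 2).add ((h 1).pow 2)
  refine this.congr_fderiv ?_
  ext v
  simp [Rr]

def Wp (g : E5 → ℝ) (x : E3) : E3 →L[ℝ] ℝ := (innerSL ℝ (Vp g (emb x))).comp embL

def Dd (C₅ : ℝ) (g : E5 → ℝ) (x : E3) : E3 →L[ℝ] ℝ :=
  C₅ • (rho x • Wp g x + Gp g (emb x) • Rr x)

lemma innerSL_comp_norm (v : E5) : ‖(innerSL ℝ v).comp embL‖ ≤ ‖v‖ := by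
  refine (ContinuousLinearMap.opNorm_comp_le _ _).trans ?_
  rw [innerSL_apply_norm]
  exact mul_le_of_le_one_right (norm_nonneg _) embL_norm

lemma Wp_sub (g : E5 → ℝ) (x y : E3) : ‖Wp g x - Wp g y‖ ≤ ‖Vp g (emb x) - Vp g (emb y)‖ := by
  have : Wp g x - Wp g y = (innerSL ℝ (Vp g (emb x) - Vp g (emb y))).comp embL := by
    unfold Wp; ext v; simp [inner_sub_left]
  rw [this]; exact innerSL_comp_norm _

lemma u_deriv {g : E5 → ℝ} {M : ℝ} (gm : Measurable g)
    (gM : ∀ y, |g y| ≤ M) (gs : Function.support g ⊆ closedBall (0:E5) 2) (x : E3) :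
    HasFDerivAt (fun x => Gp g (emb x)) (Wp g x) x :=
  (Gderiv gm gM gs (emb x)).comp x embL.hasFDerivAt

lemma Linv_eq (C₅ : ℝ) (f : E3 → ℝ) : Linv C₅ f = fun x => C₅ * (rho x * Gp (tilde f) (emb x)) := by
  ext x
  rw [Linv, rho, Gp, mul_assoc]

lemma Linv_deriv (C₅ : ℝ) {f : E3 → ℝ} {M : ℝ} (gm : Measurable (tilde f))
    (gM : ∀ y, |tilde f y| ≤ M) (gs : Function.support (tilde f) ⊆ closedBall (0:E5) 2) (x : E3) :
    HasFDerivAt (Linv C₅ f) (Dd C₅ (tilde f) x) x := by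
  rw [Linv_eq]
  exact ((rho_deriv x).mul (u_deriv gm gM gs x)).const_mul C₅

lemma le4 {h β : ℝ} (hh : 0 ≤ h) (h4 : h ≤ 4) (h0 : 0 < β) (h1 : β < 1) : h ≤ 4 * h ^ β := by
  have e : h = h ^ (1-β) * h ^ β := by
    rw [← Real.rpow_add_of_nonneg hh (by linarith) h0.le]; simp
  have e1 : h ^ (1-β) ≤ 4 ^ (1-β) := Real.rpow_le_rpow hh h4 (by linarith)
  have e2 : (4:ℝ) ^ (1-β) ≤ 4 ^ (1:ℝ) :=
    Real.rpow_le_rpow_of_exponent_le (by norm_num) (by linarith)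
  rw [Real.rpow_one] at e2
  have : 0 ≤ h ^ β := by positivity
  nlinarith

lemma Vcont {g : E5 → ℝ} {M : ℝ} (gm : Measurable g)
    (gM : ∀ y, |g y| ≤ M) (gs : Function.support g ⊆ closedBall (0:E5) 2) : Continuous (Vp g) := by
  obtain ⟨C, hC, h⟩ := Vholder (β := 1/2) (by norm_num) (by norm_num) gm gM gs
  have : HolderWith C.toNNReal (1/2) (Vp g) := by
    intro x y
    have k := h x y
    rw [edist_dist, edist_dist, dist_eq_norm, dist_eq_norm]
    have e : ((1/2 : NNReal) : ℝ) = 1/2 := by simp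
    rw [e, ENNReal.ofReal_rpow_of_nonneg (norm_nonneg _) (by norm_num)]
    change _ ≤ ENNReal.ofReal C * _
    rw [← ENNReal.ofReal_mul hC]
    exact ENNReal.ofReal_le_ofReal k
  exact this.continuous (by norm_num)

/-- for f ∈ L∞ axisymmetric, even in x₃ and supported in B̄₂, one has
L⁻¹f ∈ C^{1,β}(B̄₂) for every 0 < β < 1, and there is a constant C > 0 independent of f
such that |(L⁻¹f)(z)| + |∇(L⁻¹f)(z)| ≤ C ‖f‖_{L∞(B₂)} |z| for every z ∈ B₂. -/
theorem Linv_C1beta_and_pointwise_bound :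
    ∀ C₅ : ℝ, 0 < C₅ →
      ∃ C : ℝ, 0 < C ∧
        ∀ f : E3 → ℝ, Measurable f → Axisym f → EvenZ f →
          Function.support f ⊆ closedBall (0:E3) 2 →
          ∀ M : ℝ, (∀ x, |f x| ≤ M) →
            ((∀ β : ℝ, 0 < β → β < 1 →
                ContDiffOn ℝ 1 (Linv C₅ f) (closedBall (0:E3) 2) ∧
                ∃ Cβ : ℝ, ∀ x ∈ closedBall (0:E3) 2, ∀ y ∈ closedBall (0:E3) 2,
                  ‖fderiv ℝ (Linv C₅ f) x - fderiv ℝ (Linv C₅ f) y‖ ≤ Cβ * ‖x - y‖ ^ β)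
              ∧ ∀ z ∈ ball (0:E3) 2,
                  |Linv C₅ f z| + ‖fderiv ℝ (Linv C₅ f) z‖ ≤ C * M * ‖z‖) := by

  intro C₅ hC5
  obtain ⟨A, hA, hG⟩ := Gbd
  obtain ⟨B, hB, hV⟩ := Vbd
  refine ⟨C₅ * (6 * A + 2 * B) + 1, by positivity, ?_⟩
  intro f fm _ _ fs M fM
  have gm := tilde_meas fm
  have gs := tilde_supp fs
  have gM : ∀ y, |tilde f y| ≤ M := fun y => fM _
  have M0 : 0 ≤ M := (abs_nonneg _).trans (fM 0)
  set g := tilde f with hg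
  have hD := Linv_deriv C₅ gm gM gs
  have hfd : ∀ x, fderiv ℝ (Linv C₅ f) x = Dd C₅ g x := fun x => (hD x).fderiv
  have bG := hG g M gm gM gs
  have bV := hV g M gm gM gs
  have bW : ∀ x, ‖Wp g x‖ ≤ B * M := fun x => (innerSL_comp_norm _).trans (bV _)
  refine ⟨?_, ?_⟩
  · intro β h0 h1
    have lipU : ∀ x y, |Gp g (emb x) - Gp g (emb y)| ≤ B * M * ‖x - y‖ := by
      intro x y
      exact convex_univ.norm_image_sub_le_of_norm_hasFDerivWithin_le
        (f := fun x => Gp g (emb x)) (f' := Wp g)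
        (fun z _ => (u_deriv gm gM gs z).hasFDerivWithinAt) (fun z _ => bW z) (mem_univ y) (mem_univ x)
    constructor
    · apply ContDiff.contDiffOn
      rw [contDiff_one_iff_fderiv]
      refine ⟨fun x => (hD x).differentiableAt, ?_⟩
      have : fderiv ℝ (Linv C₅ f) = Dd C₅ g := funext hfd
      rw [this]
      have c1 : Continuous rho := by unfold rho; fun_prop
      have ce : Continuous emb := embL.continuous
      have c2 : Continuous (Wp g) := by
        unfold Wp
        exact ((innerSL ℝ).continuous.comp ((Vcont gm gM gs).comp ce)).clm_comp continuous_const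
      have c3 : Continuous (fun x => Gp g (emb x)) :=
        continuous_iff_continuousAt.2 fun x => (u_deriv gm gM gs x).continuousAt
      have c4 : Continuous Rr := by unfold Rr; fun_prop
      unfold Dd
      fun_prop
    · obtain ⟨C, hC, hH⟩ := Vholder h0 h1 gm gM gs
      refine ⟨C₅ * (32 * (B*M) + 4 * C + 32 * (B * M) + 16 * (A*M)), fun x hx y hy => ?_⟩
      rw [mem_closedBall_zero_iff] at hx hy
      rw [hfd, hfd]
      have e : Dd C₅ g x - Dd C₅ g y = C₅ • ((rho x - rho y) • Wp g x + rho y • (Wp g x - Wp g y)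
          + (Gp g (emb x) - Gp g (emb y)) • Rr x + Gp g (emb y) • Rr (x - y)) := by
        rw [← Rr_sub]; unfold Dd; module
      set H := ‖x-y‖ ^ β with hHd
      have H0 : 0 ≤ H := by positivity
      have l4 : ‖x-y‖ ≤ 4 * H := le4 (norm_nonneg _) ((norm_sub_le x y).trans (by linarith)) h0 h1
      have t1 : ‖(rho x - rho y) • Wp g x‖ ≤ (8 * (4 * H)) * (B * M) := by
        rw [norm_smul]
        exact mul_le_mul ((rho_sub hx hy).trans (by linarith)) (bW x) (norm_nonneg _) (by positivity)
      have t2 : ‖rho y • (Wp g x - Wp g y)‖ ≤ 4 * (C * H) := by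
        rw [norm_smul, Real.norm_of_nonneg (rho_nonneg y)]
        refine mul_le_mul ((rho_le y).trans (by nlinarith [norm_nonneg y])) ?_ (norm_nonneg _) (by norm_num)
        refine (Wp_sub g x y).trans ((hH _ _).trans_eq ?_)
        rw [← embL_apply, ← embL_apply, ← map_sub, embL_apply, norm_emb]
      have t3 : ‖(Gp g (emb x) - Gp g (emb y)) • Rr x‖ ≤ (B * M * (4 * H)) * 8 := by
        rw [norm_smul]
        refine mul_le_mul ((lipU x y).trans (by gcongr)) ((Rr_norm x).trans (by linarith)) (norm_nonneg _) (by positivity)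
      have t4 : ‖Gp g (emb y) • Rr (x - y)‖ ≤ (A * M) * (4 * (4 * H)) := by
        rw [norm_smul]
        exact mul_le_mul (bG _) ((Rr_norm _).trans (by linarith)) (norm_nonneg _) (by positivity)
      rw [e, norm_smul, Real.norm_of_nonneg hC5.le, mul_assoc]
      refine mul_le_mul_of_nonneg_left ?_ hC5.le
      refine (norm_add_le _ _).trans ?_
      have := norm_add₃_le (a := (rho x - rho y) • Wp g x) (b := rho y • (Wp g x - Wp g y))
        (c := (Gp g (emb x) - Gp g (emb y)) • Rr x)
      linarith
  · intro z hz
    rw [mem_ball_zero_iff] at hz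
    have hz0 := norm_nonneg z
    have r2 : rho z ≤ 2 * ‖z‖ := (rho_le z).trans (by nlinarith)
    have t1 : |Linv C₅ f z| ≤ C₅ * ((2 * ‖z‖) * (A * M)) := by
      rw [Linv_eq, abs_mul, abs_mul, abs_of_pos hC5, abs_of_nonneg (rho_nonneg z)]
      refine mul_le_mul_of_nonneg_left ?_ hC5.le
      exact mul_le_mul r2 (bG _) (abs_nonneg _) (by positivity)
    have t2 : ‖fderiv ℝ (Linv C₅ f) z‖ ≤ C₅ * ((2 * ‖z‖) * (B * M) + (A * M) * (4 * ‖z‖)) := by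
      rw [hfd, Dd, norm_smul, Real.norm_of_nonneg hC5.le]
      refine mul_le_mul_of_nonneg_left ?_ hC5.le
      refine (norm_add_le _ _).trans ?_
      rw [norm_smul, norm_smul, Real.norm_of_nonneg (rho_nonneg z)]
      refine add_le_add (mul_le_mul r2 (bW z) (norm_nonneg _) (by positivity))
        (mul_le_mul (bG _) (Rr_norm z) (norm_nonneg _) (by positivity))
    have : 0 ≤ M * ‖z‖ := by positivity
    nlinarith
end
end

section
/- Let δ > 0 be sufficiently small, let φ₁, φ₂ ∈ X_δ, let η ∈ X, and let K ∈ C³(ℝ). Then the function x ↦ (K'(φ₂(x)) − K'(φ₁(x))) η(x) belongs to X, and there is a constant C > 0 depending only on δ and on the bounds of K', K'', K''' on [−δ, δ] such that ‖(K'(φ₂(·)) − K'(φ₁(·))) η(·)‖_X ≤ C ‖φ₁ − φ₂‖_X ‖η‖_X. -/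
noncomputable section

open MeasureTheory Metric Set Filter

/-- The gradient of a function on the closed unit ball B̄₁ ⊂ ℝ³. -/
def gradB (f : E3 → ℝ) (x : E3) : E3 →L[ℝ] ℝ :=
  fderivWithin ℝ f (closedBall (0:E3) 1) x

/-- Membership in the space X: C¹ on B̄₁, axisymmetric, even in x₃, vanishing at the
origin, and with finite norm ‖f‖_X = sup_{0<|x|≤1} |∇f(x)|/|x|. -/
def InX (f : E3 → ℝ) : Prop :=
  ContDiffOn ℝ 1 f (closedBall (0:E3) 1) ∧
  (∃ F : ℝ → ℝ → ℝ, ∀ x ∈ closedBall (0:E3) 1, f x = F (cylRad x) (x 2)) ∧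
  (∀ x ∈ closedBall (0:E3) 1, f (reflect3 x) = f x) ∧
  f 0 = 0 ∧
  (∃ M : ℝ, ∀ x ∈ closedBall (0:E3) 1, ‖gradB f x‖ ≤ M * ‖x‖)

/-- ‖f‖_X ≤ M, expressed pointwise: |∇f(x)| ≤ M|x| on B̄₁. -/
def XnormLe (f : E3 → ℝ) (M : ℝ) : Prop :=
  ∀ x ∈ closedBall (0:E3) 1, ‖gradB f x‖ ≤ M * ‖x‖

lemma XnormLe.nonneg' {f : E3 → ℝ} {M : ℝ} (h : XnormLe f M) : 0 ≤ M := by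
  have h1 : ‖(EuclideanSpace.single (0 : Fin 3) (1:ℝ) : E3)‖ = 1 := by simp
  have := h (EuclideanSpace.single (0 : Fin 3) (1:ℝ)) (by simp)
  rw [h1, mul_one] at this
  exact (norm_nonneg _).trans this

lemma XnormLe.bound' {f : E3 → ℝ} {M : ℝ} (h : XnormLe f M)
    (hf : ContDiffOn ℝ 1 f (closedBall (0:E3) 1)) (h0 : f 0 = 0) :
    ∀ x ∈ closedBall (0:E3) 1, |f x| ≤ M * ‖x‖ ^ 2 := by
  intro x hx
  have hM := h.nonneg'
  have hx1 : ‖x‖ ≤ 1 := by simpa using hx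
  have hsub : closedBall (0:E3) ‖x‖ ⊆ closedBall (0:E3) 1 := closedBall_subset_closedBall hx1
  have := (convex_closedBall (0:E3) ‖x‖).norm_image_sub_le_of_norm_hasFDerivWithin_le
    (f := f) (f' := gradB f) (C := M * ‖x‖) (x := 0) (y := x)
    (fun y hy => ((hf.differentiableOn (by norm_num) y (hsub hy)).hasFDerivWithinAt).mono hsub)
    (fun y hy => (h y (hsub hy)).trans (by
      have : ‖y‖ ≤ ‖x‖ := by simpa using hy
      gcongr)) (by simp) (by simp)
  rw [h0, sub_zero, sub_zero, Real.norm_eq_abs] at this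
  linarith [this, show M * ‖x‖ * ‖x‖ = M * ‖x‖ ^ 2 by ring]

lemma lip_aux {g : ℝ → ℝ} {δ M : ℝ} (hg : Differentiable ℝ g)
    (hb : ∀ t : ℝ, |t| ≤ δ → |deriv g t| ≤ M) {s t : ℝ} (hs : |s| ≤ δ) (ht : |t| ≤ δ) :
    |g t - g s| ≤ M * |t - s| := by
  have := (convex_Icc (-δ) δ).norm_image_sub_le_of_norm_deriv_le (f := g) (C := M)
    (x := s) (y := t) (fun x _ => hg x) (fun x hx => hb x (abs_le.2 hx))
    (abs_le.1 hs) (abs_le.1 ht)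
  simpa using this

lemma uniqB : UniqueDiffOn ℝ (closedBall (0:E3) 1) :=
  uniqueDiffOn_convex (convex_closedBall _ _) (by
    rw [interior_closedBall _ one_ne_zero]; exact ⟨0, by simp⟩)

lemma main_est {δ M : ℝ} (hδ : 0 < δ) (hδ1 : δ ≤ 1) (hM : 0 ≤ M)
    {K : ℝ → ℝ} (hK : ContDiff ℝ 3 K)
    (hb : ∀ t : ℝ, |t| ≤ δ →
      |deriv K t| ≤ M ∧ |deriv (deriv K) t| ≤ M ∧ |deriv (deriv (deriv K)) t| ≤ M)
    {φ₁ φ₂ η : E3 → ℝ} (h1 : InX φ₁) (h1' : XnormLe φ₁ δ) (h2 : InX φ₂) (h2' : XnormLe φ₂ δ)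
    (hη : InX η) (d N : ℝ) (hd : XnormLe (fun x => φ₁ x - φ₂ x) d) (hN : XnormLe η N) :
    XnormLe (fun x => (deriv K (φ₂ x) - deriv K (φ₁ x)) * η x) ((3 * M + 1) * d * N) := by
  intro x hx
  have hK1 : ContDiff ℝ 2 (deriv K) := ContDiff.deriv' (n := 2) (hK.of_le (by norm_num))
  have hK2 : ContDiff ℝ 1 (deriv (deriv K)) := ContDiff.deriv' (n := 1) (hK1.of_le (by norm_num))
  have hd0 := hd.nonneg'
  have hN0 := hN.nonneg'
  have hx1 : ‖x‖ ≤ 1 := by simpa using hx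
  have hx0 := norm_nonneg x
  have b1 := h1'.bound' h1.1 h1.2.2.2.1 x hx
  have b2 := h2'.bound' h2.1 h2.2.2.2.1 x hx
  have bη := hN.bound' hη.1 hη.2.2.2.1 x hx
  have bd := hd.bound' (h1.1.sub h2.1) (by simp [h1.2.2.2.1, h2.2.2.2.1]) x hx
  have hsq : ‖x‖ ^ 2 ≤ 1 := by nlinarith
  have c1 : |φ₁ x| ≤ δ := b1.trans (by nlinarith)
  have c2 : |φ₂ x| ≤ δ := b2.trans (by nlinarith)
  have bd' : |φ₂ x - φ₁ x| ≤ d * ‖x‖ ^ 2 := by rw [abs_sub_comm]; exact bd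
  have l1 := lip_aux (hK1.differentiable (by norm_num)) (fun t ht => (hb t ht).2.1) c1 c2
  have l2 := lip_aux (hK2.differentiable (by norm_num)) (fun t ht => (hb t ht).2.2) c1 c2
  have D1 := (h1.1.differentiableOn (by norm_num) x hx).hasFDerivWithinAt
  have D2 := (h2.1.differentiableOn (by norm_num) x hx).hasFDerivWithinAt
  have Dη := (hη.1.differentiableOn (by norm_num) x hx).hasFDerivWithinAt
  have e1 := ((hK1.differentiable (by norm_num) (φ₁ x)).hasDerivAt).comp_hasFDerivWithinAt x D1
  have e2 := ((hK1.differentiable (by norm_num) (φ₂ x)).hasDerivAt).comp_hasFDerivWithinAt x D2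
  have hU := uniqB x hx
  have G : gradB (fun x => (deriv K (φ₂ x) - deriv K (φ₁ x)) * η x) x = _ :=
    ((e2.sub e1).mul Dη).fderivWithin hU
  have Gd : gradB (fun x => φ₁ x - φ₂ x) x = _ := (D1.sub D2).fderivWithin hU
  have nd := hd x hx
  have nη := hN x hx
  have n1 := h1' x hx
  rw [Gd] at nd
  rw [G]
  simp only [gradB] at nη n1
  simp only [Function.comp, Pi.sub_apply]
  set A := fderivWithin ℝ φ₁ (closedBall (0:E3) 1) x
  set B := fderivWithin ℝ φ₂ (closedBall (0:E3) 1) x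
  set H := fderivWithin ℝ η (closedBall (0:E3) 1) x
  have k2 := (hb _ c2).2.1
  set p := deriv (deriv K) (φ₂ x)
  set q := deriv (deriv K) (φ₁ x)
  have eq : p • B - q • A = (-p) • (A - B) + (p - q) • A := by module
  have m1 : |deriv K (φ₂ x) - deriv K (φ₁ x)| ≤ M * d * ‖x‖ ^ 2 :=
    l1.trans (by rw [mul_assoc]; gcongr)
  have m2 : |p - q| ≤ M * d * ‖x‖ ^ 2 := l2.trans (by rw [mul_assoc]; gcongr)
  have m3 : ‖p • B - q • A‖ ≤ M * (d * ‖x‖) + M * d * ‖x‖ ^ 2 * (δ * ‖x‖) := by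
    rw [eq]
    refine (norm_add_le _ _).trans ?_
    rw [norm_smul, norm_smul, norm_neg, Real.norm_eq_abs, Real.norm_eq_abs]
    gcongr
  have m4 : ‖p • B - q • A‖ ≤ 2 * M * d * ‖x‖ := m3.trans (by
    have : ‖x‖ ^ 2 * δ ≤ 1 := by nlinarith
    have := mul_le_mul_of_nonneg_left this (show 0 ≤ M * d * ‖x‖ by positivity)
    nlinarith)
  refine (norm_add_le _ _).trans ?_
  rw [norm_smul, norm_smul, Real.norm_eq_abs, Real.norm_eq_abs]
  calc _ ≤ (M * d * ‖x‖ ^ 2) * (N * ‖x‖) + (N * ‖x‖ ^ 2) * (2 * M * d * ‖x‖) := by gcongr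
    _ = (3 * M * d * N * ‖x‖) * ‖x‖ ^ 2 := by ring
    _ ≤ (3 * M * d * N * ‖x‖) * 1 := by gcongr
    _ ≤ (3 * M + 1) * d * N * ‖x‖ := by
      have : 0 ≤ d * N * ‖x‖ := by positivity
      nlinarith

/-- for δ > 0 sufficiently small, φ₁, φ₂ ∈ X_δ, η ∈ X, and K ∈ C³(ℝ),
the function x ↦ (K'(φ₂(x)) − K'(φ₁(x))) η(x) belongs to X, with
‖(K'(φ₂(·)) − K'(φ₁(·))) η(·)‖_X ≤ C ‖φ₁ − φ₂‖_X ‖η‖_X, where C depends only on δ and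
on the bounds of K', K'', K''' on [−δ, δ]. -/
theorem Kprime_difference_product_estimate :
    ∃ δ₀ : ℝ, 0 < δ₀ ∧ ∀ δ : ℝ, 0 < δ → δ ≤ δ₀ →
      ∀ M : ℝ, 0 ≤ M →
        ∃ C : ℝ, 0 < C ∧
          ∀ K : ℝ → ℝ, ContDiff ℝ 3 K →
            (∀ t : ℝ, |t| ≤ δ →
              |deriv K t| ≤ M ∧ |deriv (deriv K) t| ≤ M ∧ |deriv (deriv (deriv K)) t| ≤ M) →
            ∀ φ₁ φ₂ η : E3 → ℝ,
              InX φ₁ → XnormLe φ₁ δ → InX φ₂ → XnormLe φ₂ δ → InX η →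
              (InX (fun x => (deriv K (φ₂ x) - deriv K (φ₁ x)) * η x) ∧
                ∀ d N : ℝ, XnormLe (fun x => φ₁ x - φ₂ x) d → XnormLe η N →
                  XnormLe (fun x => (deriv K (φ₂ x) - deriv K (φ₁ x)) * η x) (C * d * N)) := by
  refine ⟨1, one_pos, fun δ hδ hδ1 M hM => ⟨3 * M + 1, by positivity, ?_⟩⟩
  intro K hK hb φ₁ φ₂ η h1 h1' h2 h2' hη
  have key := main_est hδ hδ1 hM hK hb h1 h1' h2 h2' hη
  refine ⟨?_, key⟩
  have hK1 : ContDiff ℝ 2 (deriv K) := ContDiff.deriv' (n := 2) (hK.of_le (by norm_num))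
  have hK1' : ContDiff ℝ 1 (deriv K) := hK1.of_le (by norm_num)
  obtain ⟨N, hN⟩ := hη.2.2.2.2
  obtain ⟨F₁, hF₁⟩ := h1.2.1
  obtain ⟨F₂, hF₂⟩ := h2.2.1
  obtain ⟨F, hF⟩ := hη.2.1
  have hd : XnormLe (fun x => φ₁ x - φ₂ x) (δ + δ) := by
    intro x hx
    have D1 := (h1.1.differentiableOn (by norm_num) x hx).hasFDerivWithinAt
    have D2 := (h2.1.differentiableOn (by norm_num) x hx).hasFDerivWithinAt
    have Gd : gradB (fun x => φ₁ x - φ₂ x) x = _ := (D1.sub D2).fderivWithin (uniqB x hx)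
    rw [Gd, add_mul]
    exact (norm_sub_le _ _).trans (add_le_add (h1' x hx) (h2' x hx))
  refine ⟨((hK1'.comp_contDiffOn h2.1).sub (hK1'.comp_contDiffOn h1.1)).mul hη.1,
    ⟨fun r z => (deriv K (F₂ r z) - deriv K (F₁ r z)) * F r z, fun x hx => ?_⟩,
    fun x hx => ?_, ?_, ⟨_, key _ N hd hN⟩⟩
  · simp only [hF₁ x hx, hF₂ x hx, hF x hx]
  · simp only [h1.2.2.1 x hx, h2.2.2.1 x hx, hη.2.2.1 x hx]
  · simp [hη.2.2.2.1]
end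
end
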